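/- arXiv:1109.1633 — 6 statements merged into one kernel-verified Lean document; each statement's English description precedes it below -/
import Mathlib

section
/- There exists an absolute constant c > 0 such that for all integers a ≥ 2 and s ≥ 2 the following holds: let λ be the largest real root of the polynomial P_s, where P_s(x) = x³ − s·x² − s·x − s if s ≡ 0 (mod 8) and s ≥ 6; P_s(x) = x³ − (s+2)x² + (s+2)x − (s−2) if s ≡ 2 (mod 8) and s ≥ 6; P_s(x) = x³ − (s+2)x² + s·x + (s+4) if s ≡ 4 (mod 8) and s ≥ 6; P_s(x) = x³ − s·x² − (s+2)x + (s+2) if s ≡ 6 (mod 8) and s ≥ 6; P_s(x) = x² − 4x − 4 if s = 4; P_s(x) = x − 2 if s = 2; and P_s(x) = x − s − 1 if s is odd and s ≥ 3. Then there exists M such that for all m ≥ M, f(a^m, a^s) ≥ c · s^{−log₂(s+1) − 3} · m^{log₂ λ}. -/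
/-!
If `w ++ [b]` has continuant `d`, then `w ++ [b, x - 1, 1, b - 1] ++ w.reverse` and its reverse have
continuant `x * d ^ 2`. Folding with `x = a ^ j`, `0 ≤ j ≤ s`, thus turns a sequence for `a ^ k`
into two sequences for `a ^ (2 * k + j)`; even `j = s` is allowed, because only `x - 1` occurs as
an entry. Comparing a folded sequence with its reverse recovers `w`: the two agree exactly along
`w`, so the folded sequence determines `x`, `b` and `w`. Hence the number `V m` of sequences for
`a ^ m` whose end entries lie in `[2, a ^ s - 2]` satisfies `V m ≥ 2 * ∑ V ((m - j) / 2)` over the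
`j ≤ s` with the parity of `m`, and `V m ≥ 1` for `m ≥ 6`.

A positive bounded weight with `lam * w m ≤ 2 * ∑ w ((m - j) / 2)` then gives, by induction on `m`,
`V m ≥ C * w m * (m + s) ^ logb 2 lam`. Constant weights suffice for odd `s` and for `s = 2`. For
the other `s` the weight depends on `m` modulo four and is an eigenvector of a linear system with
three unknowns whose characteristic polynomial is `P_s`.
-/

/-- The continuant of a finite sequence of positive integers. -/
def continuant : List ℕ → ℕ
  | [] => 1
  | [a] => a
  | a :: b :: t => a * continuant (b :: t) + continuant t

/-- `f d N` is the number of finite sequences of positive integers, all entries `< N`,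
whose continuant equals `d`. -/
noncomputable def f (d N : ℕ) : ℕ :=
  Set.ncard {l : List ℕ | (∀ x ∈ l, 0 < x ∧ x < N) ∧ continuant l = d}

/-- `lam` is the largest real root of the real function `p`. -/
def IsGreatestRoot (p : ℝ → ℝ) (lam : ℝ) : Prop :=
  p lam = 0 ∧ ∀ x : ℝ, p x = 0 → x ≤ lam

/-- The polynomial `P_s` from the paper, as a real function. -/
noncomputable def Ps (s : ℕ) (x : ℝ) : ℝ :=
  if s % 2 = 1 then x - (s : ℝ) - 1
  else if s = 2 then x - 2
  else if s = 4 then x ^ 2 - 4 * x - 4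
  else if s % 8 = 0 then x ^ 3 - (s : ℝ) * x ^ 2 - (s : ℝ) * x - (s : ℝ)
  else if s % 8 = 2 then
    x ^ 3 - ((s : ℝ) + 2) * x ^ 2 + ((s : ℝ) + 2) * x - ((s : ℝ) - 2)
  else if s % 8 = 4 then
    x ^ 3 - ((s : ℝ) + 2) * x ^ 2 + (s : ℝ) * x + ((s : ℝ) + 4)
  else x ^ 3 - (s : ℝ) * x ^ 2 - ((s : ℝ) + 2) * x + ((s : ℝ) + 2)

/-! ### Continuants -/

/-- The product of the elementary matrices `[[a, 1], [1, 0]]` over the entries `a` of a list; its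
top-left entry is the continuant of the list. -/
def continuantMatrix (l : List ℕ) : Matrix (Fin 2) (Fin 2) ℕ :=
  (l.map fun a => !![a, 1; 1, 0]).prod

lemma continuantMatrix_append (l k : List ℕ) :
    continuantMatrix (l ++ k) = continuantMatrix l * continuantMatrix k := by
  simp [continuantMatrix]

lemma continuantMatrix_reverse (l : List ℕ) :
    continuantMatrix l.reverse = (continuantMatrix l).transpose := by
  have symm (a : ℕ) : (!![a, 1; 1, 0] : Matrix (Fin 2) (Fin 2) ℕ).transpose = !![a, 1; 1, 0] := by
    ext i j; fin_cases i <;> fin_cases j <;> rfl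
  simp [continuantMatrix, Matrix.transpose_list_prod, Function.comp_def, symm]

lemma continuantMatrix_cons (a : ℕ) (l : List ℕ) :
    continuantMatrix (a :: l) = !![a, 1; 1, 0] * continuantMatrix l := by
  simp [continuantMatrix]

lemma continuantMatrix_zero_zero : ∀ l : List ℕ, continuantMatrix l 0 0 = continuant l
  | [] => rfl
  | [a] => by simp [continuantMatrix, continuant]
  | a :: b :: t => by
    have row_zero : continuantMatrix (a :: b :: t) 0 0
        = a * continuantMatrix (b :: t) 0 0 + continuantMatrix (b :: t) 1 0 := by
      simp [continuantMatrix_cons a, Matrix.mul_apply]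
    have row_one : continuantMatrix (b :: t) 1 0 = continuantMatrix t 0 0 := by
      simp [continuantMatrix_cons b, Matrix.mul_apply]
    rw [row_zero, row_one, continuantMatrix_zero_zero (b :: t), continuantMatrix_zero_zero t,
      continuant]

lemma continuant_reverse (l : List ℕ) : continuant l.reverse = continuant l := by
  rw [← continuantMatrix_zero_zero, continuantMatrix_reverse, Matrix.transpose_apply,
    continuantMatrix_zero_zero]

lemma continuant_pos : ∀ {l : List ℕ}, (∀ x ∈ l, 0 < x) → 0 < continuant l
  | [], _ => Nat.one_pos
  | [a], h => h a (by simp)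
  | a :: b :: t, h => by
    have ht : 0 < continuant t := continuant_pos fun x hx => h x (by simp [hx])
    exact Nat.add_pos_right _ ht

lemma length_le_continuant : ∀ {l : List ℕ}, (∀ x ∈ l, 0 < x) → l.length ≤ continuant l
  | [], _ => Nat.zero_le _
  | [a], h => h a (by simp)
  | a :: b :: t, h => by
    have ha : 0 < a := h a (by simp)
    have ht : 0 < continuant t := continuant_pos fun x hx => h x (by simp [hx])
    calc (b :: t).length + 1 ≤ continuant (b :: t) + continuant t :=
          Nat.add_le_add (length_le_continuant fun x hx => h x (by simp_all)) ht
      _ ≤ a * continuant (b :: t) + continuant t := by gcongr; exact Nat.le_mul_of_pos_left _ ha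

lemma finite_setOf_continuant_eq (d N : ℕ) :
    {l : List ℕ | (∀ x ∈ l, 0 < x ∧ x < N) ∧ continuant l = d}.Finite := by
  refine ((List.finite_length_le (Fin N) d).image (List.map Fin.val)).subset ?_
  rintro l ⟨hl, rfl⟩
  refine ⟨l.pmap Fin.mk fun x hx => (hl x hx).2, ?_, by simp [List.map_pmap]⟩
  simpa using length_le_continuant fun x hx => (hl x hx).1

/-! ### Folding -/

/-- The block placed between `w` and `w.reverse` when `w ++ [b]` is folded with multiplier `x`.
The Boolean selects one of two mutually reversed blocks. For `x = 1` the block `[b, 0, 1, b - 1]`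
contains a zero entry and is contracted to `[b + 1, b - 1]`. -/
def foldBlock (x b : ℕ) : Bool → List ℕ
  | true => if x = 1 then [b + 1, b - 1] else [b, x - 1, 1, b - 1]
  | false => if x = 1 then [b - 1, b + 1] else [b - 1, 1, x - 1, b]

lemma reverse_foldBlock (x b : ℕ) (e : Bool) : (foldBlock x b e).reverse = foldBlock x b !e := by
  cases e <;> simp only [foldBlock, Bool.not_true, Bool.not_false] <;> split_ifs <;> rfl

lemma reverse_append_foldBlock (w : List ℕ) (x b : ℕ) (e : Bool) :
    (w ++ foldBlock x b e ++ w.reverse).reverse = w ++ foldBlock x b (!e) ++ w.reverse := by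
  simp [reverse_foldBlock]

lemma continuant_fold {x b : ℕ} (hx : 0 < x) (hb : 0 < b) (w : List ℕ) (e : Bool) :
    continuant (w ++ foldBlock x b e ++ w.reverse) = x * continuant (w ++ [b]) ^ 2 := by
  have fold_true : continuant (w ++ foldBlock x b true ++ w.reverse)
      = x * continuant (w ++ [b]) ^ 2 := by
    obtain ⟨b, rfl⟩ := Nat.exists_eq_succ_of_ne_zero hb.ne'
    obtain ⟨x, rfl⟩ := Nat.exists_eq_succ_of_ne_zero hx.ne'
    simp only [← continuantMatrix_zero_zero, continuantMatrix_append, continuantMatrix_reverse]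
    rw [foldBlock]
    split_ifs with h <;>
      simp_all [continuantMatrix, Matrix.mul_apply, Fin.sum_univ_two] <;> ring
  cases e
  · rw [← fold_true, ← continuant_reverse, reverse_append_foldBlock, Bool.not_false]
  · exact fold_true

lemma append_inj_of_head?_ne {α : Type*} {w w' p p' q q' : List α} (hpq : p.head? ≠ q.head?)
    (hpq' : p'.head? ≠ q'.head?) (hp : w ++ p = w' ++ p') (hq : w ++ q = w' ++ q') :
    w = w' ∧ p = p' := by
  induction w generalizing w' with
  | nil => cases w' <;> simp_all
  | cons y w ih =>
    cases w' with
    | nil =>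
      rw [List.nil_append] at hp hq
      simp [← hp, ← hq] at hpq'
    | cons y' w' =>
      simp only [List.cons_append, List.cons.injEq] at hp hq ⊢
      obtain ⟨rfl, rfl⟩ := ih hp.2 hq.2
      simp [hp.1]

lemma foldBlock_inj {x x' b b' : ℕ} (hx : 0 < x) (hx' : 0 < x') (hb : 0 < b) (hb' : 0 < b')
    {e e' : Bool} (h : foldBlock x b e = foldBlock x' b' e') : e = e' ∧ x = x' ∧ b = b' := by
  cases e <;> cases e' <;> simp only [foldBlock] at h <;> split_ifs at h <;> simp at h ⊢ <;> omega

lemma append_foldBlock_inj {x x' b b' : ℕ} (hx : 0 < x) (hx' : 0 < x') (hb : 0 < b) (hb' : 0 < b')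
    {e e' : Bool} {w w' : List ℕ}
    (h : w ++ foldBlock x b e ++ w.reverse = w' ++ foldBlock x' b' e' ++ w'.reverse) :
    e = e' ∧ x = x' ∧ b = b' ∧ w = w' := by
  have head_ne {x b : ℕ} (hb : 0 < b) (e : Bool) (u : List ℕ) :
      (foldBlock x b e ++ u).head? ≠ (foldBlock x b (!e) ++ u).head? := by
    cases e <;> simp only [foldBlock, Bool.not_true, Bool.not_false] <;> split_ifs <;>
      simp <;> omega
  have h_rev := congrArg List.reverse h
  rw [reverse_append_foldBlock, reverse_append_foldBlock] at h_rev
  simp only [List.append_assoc] at h h_rev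
  obtain ⟨rfl, h⟩ := append_inj_of_head?_ne (head_ne hb e _) (head_ne hb' e' _) h h_rev
  obtain ⟨rfl, rfl, rfl⟩ := foldBlock_inj hx hx' hb hb' (List.append_cancel_right h)
  exact ⟨rfl, rfl, rfl, rfl⟩

/-! ### Counting foldable sequences -/

/-- A sequence `first, middle, last` of at least two terms; the end entries are singled out because
folding duplicates the first one and removes the last one. -/
structure TwoEnded where
  first : ℕ
  middle : List ℕ
  last : ℕ

namespace TwoEnded

/-- The underlying sequence. -/
def toList (p : TwoEnded) : List ℕ := p.first :: (p.middle ++ [p.last])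

lemma toList_injective : Function.Injective toList := by
  rintro ⟨c, t, b⟩ ⟨c', t', b'⟩ h
  simp_all [toList]

/-- The sequence `w, b` with last entry `b` folded to `w, foldBlock x b e, w.reverse`. -/
def fold (x : ℕ) (e : Bool) (p : TwoEnded) : TwoEnded :=
  ⟨p.first, p.middle ++ foldBlock x p.last e ++ p.middle.reverse, p.first⟩

lemma toList_fold (x : ℕ) (e : Bool) (p : TwoEnded) :
    (p.fold x e).toList =
      (p.first :: p.middle) ++ foldBlock x p.last e ++ (p.first :: p.middle).reverse := by
  simp [toList, fold]

lemma fold_inj {x x' : ℕ} (hx : 0 < x) (hx' : 0 < x') {e e' : Bool} {p p' : TwoEnded}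
    (hp : 0 < p.last) (hp' : 0 < p'.last) (h : p.fold x e = p'.fold x' e') :
    e = e' ∧ x = x' ∧ p = p' := by
  obtain ⟨c, t, b⟩ := p
  obtain ⟨c', t', b'⟩ := p'
  have h_list := congrArg toList h
  rw [toList_fold, toList_fold] at h_list
  obtain ⟨rfl, rfl, rfl, hw⟩ := append_foldBlock_inj hx hx' hp hp' h_list
  simp_all

end TwoEnded

/-- The sequences with entries in `[1, N - 1]`, end entries in `[2, N - 2]` and continuant `d`.
The condition on the ends makes the class stable under folding. -/
structure IsFoldable (N d : ℕ) (p : TwoEnded) : Prop where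
  two_le_first : 2 ≤ p.first
  first_add_two_le : p.first + 2 ≤ N
  two_le_last : 2 ≤ p.last
  last_add_two_le : p.last + 2 ≤ N
  middle_bounds : ∀ y ∈ p.middle, 0 < y ∧ y < N
  continuant_eq : continuant p.toList = d

/-- The number of sequences in the class `IsFoldable N d`. -/
noncomputable def foldableCount (N d : ℕ) : ℕ := Nat.card {p // IsFoldable N d p}

namespace IsFoldable

lemma bounds_of_mem_toList {N d : ℕ} {p : TwoEnded} (hp : IsFoldable N d p) :
    ∀ y ∈ p.toList, 0 < y ∧ y < N := by
  obtain ⟨h₁, h₂, h₃, h₄, h_mid, -⟩ := hp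
  simp only [TwoEnded.toList, List.mem_cons, List.mem_append, List.not_mem_nil, or_false]
  rintro y (rfl | hy | rfl)
  · omega
  · exact h_mid y hy
  · omega

lemma bounds_of_mem_foldBlock {N d x : ℕ} {p : TwoEnded} (hp : IsFoldable N d p) (hx : 0 < x)
    (hxN : x ≤ N) (e : Bool) : ∀ y ∈ foldBlock x p.last e, 0 < y ∧ y < N := by
  have h₁ := hp.two_le_last
  have h₂ := hp.last_add_two_le
  cases e <;> simp only [foldBlock] <;> split_ifs <;> simp <;> omega

lemma fold {N d x : ℕ} {p : TwoEnded} (hp : IsFoldable N d p) (hx : 0 < x) (hxN : x ≤ N)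
    (e : Bool) : IsFoldable N (x * d ^ 2) (p.fold x e) where
  two_le_first := hp.two_le_first
  first_add_two_le := hp.first_add_two_le
  two_le_last := hp.two_le_first
  last_add_two_le := hp.first_add_two_le
  middle_bounds y hy := by
    simp only [TwoEnded.fold, List.mem_append, List.mem_reverse] at hy
    rcases hy with (hy | hy) | hy
    · exact hp.middle_bounds y hy
    · exact hp.bounds_of_mem_foldBlock hx hxN e y hy
    · exact hp.middle_bounds y hy
  continuant_eq := by
    rw [TwoEnded.toList_fold, continuant_fold hx (by linarith [hp.two_le_last]),
      ← hp.continuant_eq]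
    rfl

end IsFoldable

/-- The map from foldable sequences to the sequences counted by `f`. -/
def foldableToList (N d : ℕ) (p : {p // IsFoldable N d p}) :
    {l : List ℕ | (∀ x ∈ l, 0 < x ∧ x < N) ∧ continuant l = d} :=
  ⟨p.1.toList, p.2.bounds_of_mem_toList, p.2.continuant_eq⟩

lemma foldableToList_injective (N d : ℕ) : Function.Injective (foldableToList N d) := fun _ _ h =>
  Subtype.ext (TwoEnded.toList_injective (congrArg Subtype.val h))

instance finite_isFoldable (N d : ℕ) : Finite {p // IsFoldable N d p} :=
  have := (finite_setOf_continuant_eq d N).to_subtype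
  .of_injective _ (foldableToList_injective N d)

lemma foldableCount_le_f (N d : ℕ) : foldableCount N d ≤ f d N := by
  have := (finite_setOf_continuant_eq d N).to_subtype
  exact Nat.card_le_card_of_injective _ (foldableToList_injective N d)

lemma one_le_foldableCount {N d : ℕ} (h : ∃ p, IsFoldable N d p) : 1 ≤ foldableCount N d :=
  have := nonempty_subtype.2 h
  Nat.card_pos

lemma two_mul_sum_foldableCount_le {ι : Type*} {N d : ℕ} (I : Finset ι) {x r : ι → ℕ}
    (hx_inj : Set.InjOn x I) (hx : ∀ i ∈ I, 0 < x i) (hxN : ∀ i ∈ I, x i ≤ N)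
    (hd : ∀ i ∈ I, x i * r i ^ 2 = d) :
    2 * ∑ i ∈ I, foldableCount N (r i) ≤ foldableCount N d := by
  let φ (q : Σ k : Bool × I, {p // IsFoldable N (r k.2) p}) : {p // IsFoldable N d p} :=
    ⟨q.2.1.fold (x q.1.2) q.1.1,
      hd _ q.1.2.2 ▸ q.2.2.fold (hx _ q.1.2.2) (hxN _ q.1.2.2) q.1.1⟩
  have φ_inj : Function.Injective φ := by
    rintro ⟨⟨e, i, hi⟩, p, hp⟩ ⟨⟨e', i', hi'⟩, p', hp'⟩ h
    obtain ⟨rfl, hxx, rfl⟩ := TwoEnded.fold_inj (hx i hi) (hx i' hi')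
      (by linarith [hp.two_le_last]) (by linarith [hp'.two_le_last]) (congrArg Subtype.val h)
    obtain rfl := hx_inj hi hi' hxx
    rfl
  calc 2 * ∑ i ∈ I, foldableCount N (r i)
      = Nat.card (Σ k : Bool × I, {p // IsFoldable N (r k.2) p}) := by
        rw [Nat.card_sigma, Fintype.sum_prod_type, Fintype.sum_bool, ← two_mul,
          ← Finset.sum_coe_sort]
        rfl
    _ ≤ foldableCount N d := Nat.card_le_card_of_injective φ φ_inj

/-! ### Powers -/

lemma exists_isFoldable_mul_sq {N x b : ℕ} (hb : 2 ≤ b) (hbN : b + 2 ≤ N) (hx : 2 ≤ x)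
    (hxN : x ≤ N) : ∃ p, IsFoldable N (x * b ^ 2) p := by
  obtain rfl | hb : b = 2 ∨ 3 ≤ b := by omega
  · -- the block `[2, x - 1, 1, 1]` contracted to avoid the end entry `1`
    refine ⟨⟨2, [x - 1], 2⟩, by simp, by simpa, by simp, by simpa, by simp; omega, ?_⟩
    simp only [TwoEnded.toList, List.cons_append, List.nil_append, continuant]
    omega
  · refine ⟨⟨b, [x - 1, 1], b - 1⟩, by simp; omega, by simpa, by simp; omega, by simp; omega,
      by simp; omega, ?_⟩
    simpa [foldBlock, TwoEnded.toList, continuant, show x ≠ 1 by omega] using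
      continuant_fold (by omega : 0 < x) (by omega : 0 < b) [] true

section Powers

variable {a s : ℕ}

lemma add_two_le_pow (ha : 2 ≤ a) (hs : 2 ≤ s) : a + 2 ≤ a ^ s :=
  calc a + 2 ≤ a ^ 2 := by nlinarith
    _ ≤ a ^ s := Nat.pow_le_pow_right (by omega) hs

lemma exists_isFoldable_pow_add_two {j : ℕ} (ha : 2 ≤ a) (hs : 2 ≤ s) (hj : j ≠ 0) (hjs : j ≤ s) :
    ∃ p, IsFoldable (a ^ s) (a ^ (j + 2)) p :=
  pow_add a j 2 ▸ exists_isFoldable_mul_sq ha (add_two_le_pow ha hs)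
    (ha.trans (Nat.le_self_pow hj a)) (Nat.pow_le_pow_right (by omega) hjs)

lemma exists_isFoldable_pow_two_mul_add {j k : ℕ} (ha : 0 < a) (hjs : j ≤ s)
    (h : ∃ p, IsFoldable (a ^ s) (a ^ k) p) : ∃ p, IsFoldable (a ^ s) (a ^ (2 * k + j)) p := by
  obtain ⟨p, hp⟩ := h
  have h_fold := hp.fold (Nat.pow_pos ha) (Nat.pow_le_pow_right ha hjs) true
  rw [← pow_mul', ← pow_add, add_comm] at h_fold
  exact ⟨_, h_fold⟩

lemma exists_isFoldable_pow_eleven (ha : 2 ≤ a) (hs : 2 ≤ s) :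
    ∃ p, IsFoldable (a ^ s) (a ^ 11) p := by
  have ha₀ : 0 < a := by omega
  obtain rfl | hs₃ : s = 2 ∨ 3 ≤ s := by omega
  · obtain rfl | ha₃ : a = 2 ∨ 3 ≤ a := by omega
    · -- `11` is reached by folding only from `5`, for which there is no sequence when `a = s = 2`
      exact ⟨⟨2, [1, 1, 2, 3, 3, 1, 1, 2], 2⟩, by simp, by simp, by simp, by simp, by simp,
        by simp [TwoEnded.toList, continuant]⟩
    · have two : ∃ p, IsFoldable (a ^ 2) (a ^ 2) p := by
        obtain ⟨c, rfl⟩ := Nat.exists_eq_add_of_le' ha₃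
        refine ⟨⟨c + 2, [], c + 4⟩, by simp, by simp; nlinarith, by simp, by simp; nlinarith,
          by simp, ?_⟩
        simp [TwoEnded.toList, continuant]
        ring
      have five := exists_isFoldable_pow_two_mul_add ha₀ one_le_two two
      exact exists_isFoldable_pow_two_mul_add ha₀ one_le_two five
  · have four := exists_isFoldable_pow_add_two ha hs two_ne_zero hs
    exact exists_isFoldable_pow_two_mul_add ha₀ hs₃ four

lemma exists_isFoldable_pow (ha : 2 ≤ a) (hs : 2 ≤ s) :
    ∀ m, 6 ≤ m → ∃ p, IsFoldable (a ^ s) (a ^ m) p := by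
  have double {m : ℕ} (h : ∃ p, IsFoldable (a ^ s) (a ^ (m / 2)) p) :
      ∃ p, IsFoldable (a ^ s) (a ^ m) p :=
    m.div_add_mod 2 ▸
      exists_isFoldable_pow_two_mul_add (by omega) ((m.mod_lt two_pos).le.trans hs) h
  have three := exists_isFoldable_pow_add_two ha hs one_ne_zero (by omega)
  have four := exists_isFoldable_pow_add_two ha hs two_ne_zero hs
  intro m
  induction m using Nat.strong_induction_on with
  | _ m ih =>
    intro hm
    obtain hm | hm := Nat.lt_or_ge m 12
    · interval_cases m
      · exact double three
      · exact double three
      · exact double four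
      · exact double four
      · exact exists_isFoldable_pow_two_mul_add (by omega) hs four
      · exact exists_isFoldable_pow_eleven ha hs
    · exact double (ih (m / 2) (by omega) (by omega))

end Powers

/-! ### Growth -/

/-- The operator of the folding recursion: twice the sum of `w k` over the solutions of
`m = 2 * k + j` with `0 ≤ j ≤ s`, parametrised by `k = m / 2 - i` and `j = m % 2 + 2 * i`. -/
noncomputable def foldOp (s : ℕ) (w : ℕ → ℝ) (m : ℕ) : ℝ :=
  2 * ∑ i ∈ Finset.range ((s + 2 - m % 2) / 2), w (m / 2 - i)

lemma foldOp_foldableCount_le {a s m : ℕ} (ha : 2 ≤ a) (hm : s ≤ m) :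
    foldOp s (fun k => foldableCount (a ^ s) (a ^ k)) m ≤ foldableCount (a ^ s) (a ^ m) := by
  set I := Finset.range ((s + 2 - m % 2) / 2) with hI
  have hj {i : ℕ} (hi : i ∈ I) : m % 2 + 2 * i ≤ s := by
    rw [hI, Finset.mem_range] at hi
    omega
  have h_count : 2 * ∑ i ∈ I, foldableCount (a ^ s) (a ^ (m / 2 - i))
      ≤ foldableCount (a ^ s) (a ^ m) := by
    refine two_mul_sum_foldableCount_le I (x := fun i => a ^ (m % 2 + 2 * i)) ?_ ?_ ?_ ?_
    · intro i _ i' _ h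
      have := Nat.pow_right_injective ha h
      omega
    · exact fun i _ => Nat.pow_pos (by omega)
    · exact fun i hi => Nat.pow_le_pow_right (by omega) (hj hi)
    · intro i hi
      have h_exp : m % 2 + 2 * i + 2 * (m / 2 - i) = m := by
        have := hj hi
        omega
      rw [← pow_mul', ← pow_add, h_exp]
  simp only [foldOp]
  exact_mod_cast h_count

-- This is why the growth of the count is measured by `m + s` rather than by `m`.
lemma add_div_two_le_div_two_sub_add {s m i : ℕ} (hi : i < (s + 2 - m % 2) / 2) :
    (m + s : ℝ) / 2 ≤ (m / 2 - i : ℕ) + s := by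
  rw [div_le_iff₀ two_pos]
  norm_cast
  omega

lemma mul_rpow_le_of_foldOp_le {s m₀ : ℕ} {α U : ℝ} {V w : ℕ → ℝ} (hm₀ : 0 < m₀) (hα : 0 ≤ α)
    (hV : ∀ m, s ≤ m → foldOp s V m ≤ V m) (hV_one : ∀ m, m₀ ≤ m → 1 ≤ V m)
    (hw : ∀ m, s ≤ m → 2 ^ α * w m ≤ foldOp s w m) (hw_nonneg : ∀ m, 0 ≤ w m)
    (hw_le : ∀ m, w m ≤ U) :
    ∀ m, m₀ ≤ m → w m * (m + s : ℝ) ^ α ≤ U * (2 * m₀ + 2 * s : ℝ) ^ α * V m := by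
  set K := U * (2 * m₀ + 2 * s : ℝ) ^ α with hK
  have hU : 0 ≤ U := (hw_nonneg 0).trans (hw_le 0)
  have hK_nonneg : 0 ≤ K := by positivity
  intro m
  induction m using Nat.strong_induction_on with
  | _ m ih =>
    intro hm
    obtain h_small | h_large := Nat.lt_or_ge m (2 * m₀ + s)
    · calc w m * (m + s : ℝ) ^ α ≤ K := by
            have : (m + s : ℝ) ≤ 2 * m₀ + 2 * s := by norm_cast; omega
            rw [hK]
            gcongr
            exact hw_le m
        _ ≤ K * V m := le_mul_of_one_le_right hK_nonneg (hV_one m hm)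
    · have h_term : ∀ i ∈ Finset.range ((s + 2 - m % 2) / 2),
          w (m / 2 - i) * ((m + s : ℝ) / 2) ^ α ≤ K * V (m / 2 - i) := by
        intro i hi
        rw [Finset.mem_range] at hi
        calc w (m / 2 - i) * ((m + s : ℝ) / 2) ^ α
            ≤ w (m / 2 - i) * ((m / 2 - i : ℕ) + s : ℝ) ^ α := by
              gcongr
              · exact hw_nonneg _
              · exact add_div_two_le_div_two_sub_add hi
          _ ≤ K * V (m / 2 - i) := ih _ (by omega) (by omega)
      calc w m * (m + s : ℝ) ^ α = 2 ^ α * w m * ((m + s : ℝ) / 2) ^ α := by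
            rw [Real.div_rpow (by positivity) two_pos.le]
            field_simp
        _ ≤ foldOp s w m * ((m + s : ℝ) / 2) ^ α := by
            gcongr
            exact hw m (by omega)
        _ ≤ K * foldOp s V m := by
            have h_sum := Finset.sum_le_sum h_term
            rw [← Finset.sum_mul, ← Finset.mul_sum] at h_sum
            unfold foldOp
            linarith
        _ ≤ K * V m := by
            gcongr
            exact hV m (by omega)

lemma twelve_add_two_mul_rpow_le {s α : ℝ} (hs : 2 ≤ s) (hα : 0 ≤ α)
    (hαs : α ≤ Real.logb 2 (s + 1)) :
    (12 + 2 * s) ^ α ≤ 8 * s ^ (Real.logb 2 (s + 1) + 3) := by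
  set β := Real.logb 2 (s + 1)
  have two_rpow : (2 : ℝ) ^ β = s + 1 :=
    Real.rpow_logb two_pos (OfNat.one_ne_ofNat 2).symm (by linarith)
  have eight_rpow : (2 ^ 3 : ℝ) ^ β = (s + 1) ^ 3 := by
    rw [← two_rpow, ← Real.rpow_pow_comm two_pos.le]
  calc (12 + 2 * s) ^ α ≤ (12 + 2 * s) ^ β :=
        Real.rpow_le_rpow_of_exponent_le (by linarith) hαs
    _ ≤ (2 ^ 3 * s) ^ β :=
        Real.rpow_le_rpow (by linarith) (by linarith) (hα.trans hαs)
    _ = (s + 1) ^ 3 * s ^ β := by rw [Real.mul_rpow (by norm_num) (by linarith), eight_rpow]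
    _ ≤ (2 * s) ^ 3 * s ^ β := by gcongr; linarith
    _ = 8 * s ^ (β + 3) := by
        rw [Real.rpow_add (by linarith), Real.rpow_ofNat]
        ring

lemma rpow_le_f_of_weight {a s : ℕ} (ha : 2 ≤ a) (hs : 2 ≤ s) {lam U : ℝ} {w : ℕ → ℝ}
    (hlam : 1 ≤ lam) (hlam_le : lam ≤ s + 1) (hU : 0 < U) (hw_le : ∀ m, w m ≤ U)
    (hw_ge : ∀ m, U ≤ 4 * w m) (hw : ∀ m, s ≤ m → lam * w m ≤ foldOp s w m) {m : ℕ} (hm : 6 ≤ m) :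
    1 / 32 * (s : ℝ) ^ (-(Real.logb 2 ((s : ℝ) + 1)) - 3) * (m : ℝ) ^ (Real.logb 2 lam)
      ≤ (f (a ^ m) (a ^ s) : ℝ) := by
  set α := Real.logb 2 lam
  set S := (s : ℝ) ^ (Real.logb 2 ((s : ℝ) + 1) + 3) with hS
  have hs' : (2 : ℝ) ≤ s := by exact_mod_cast hs
  have hα : 0 ≤ α := Real.logb_nonneg one_lt_two hlam
  have two_rpow : (2 : ℝ) ^ α = lam :=
    Real.rpow_logb two_pos (OfNat.one_ne_ofNat 2).symm (by linarith)
  have hαs : α ≤ Real.logb 2 (s + 1) := Real.logb_le_logb_of_le one_lt_two (by linarith) hlam_le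
  have growth := mul_rpow_le_of_foldOp_le (m₀ := 6) (V := fun k => foldableCount (a ^ s) (a ^ k))
    (by norm_num) hα (fun m hm => foldOp_foldableCount_le ha hm)
    (fun m hm => by exact_mod_cast one_le_foldableCount (exists_isFoldable_pow ha hs m hm))
    (two_rpow ▸ hw) (fun m => by linarith [hw_ge m]) hw_le m hm
  have upper : U * (m : ℝ) ^ α ≤ U * (32 * S * f (a ^ m) (a ^ s)) :=
    calc U * (m : ℝ) ^ α ≤ 4 * w m * (m + s : ℝ) ^ α := by
          gcongr
          · linarith [hw_ge m]
          · exact hw_ge m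
          · linarith
      _ ≤ 4 * (U * (12 + 2 * s : ℝ) ^ α * foldableCount (a ^ s) (a ^ m)) := by
          norm_num at growth
          linarith
      _ ≤ 4 * (U * (8 * S) * f (a ^ m) (a ^ s)) := by
          gcongr
          · exact twelve_add_two_mul_rpow_le hs' hα hαs
          · exact foldableCount_le_f _ _
      _ = U * (32 * S * f (a ^ m) (a ^ s)) := by ring
  have hS_inv : (s : ℝ) ^ (-(Real.logb 2 ((s : ℝ) + 1)) - 3) = S⁻¹ := by
    rw [hS, ← Real.rpow_neg (by linarith), neg_add']
  rw [hS_inv, mul_assoc, inv_mul_eq_div, one_div_mul_eq_div, div_div, div_le_iff₀ (by positivity)]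
  linarith [le_of_mul_le_mul_left upper hU]

lemma rpow_le_f_of_constant_weight {a s : ℕ} (ha : 2 ≤ a) (hs : 2 ≤ s) {m : ℕ} (hm : 6 ≤ m) :
    1 / 32 * (s : ℝ) ^ (-(Real.logb 2 ((s : ℝ) + 1)) - 3)
        * (m : ℝ) ^ (Real.logb 2 ((2 * ((s + 1) / 2) : ℕ) : ℝ))
      ≤ (f (a ^ m) (a ^ s) : ℝ) := by
  refine rpow_le_f_of_weight ha hs ?_ ?_ one_pos (fun _ => le_rfl) (fun _ => by norm_num)
    (fun n _ => ?_) hm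
  · exact_mod_cast (by omega : 1 ≤ 2 * ((s + 1) / 2))
  · exact_mod_cast (by omega : 2 * ((s + 1) / 2) ≤ s + 1)
  · have h_card : 2 * ((s + 1) / 2) ≤ 2 * ((s + 2 - n % 2) / 2) := by omega
    rw [foldOp, Finset.sum_const, Finset.card_range, nsmul_one, mul_one]
    exact_mod_cast h_card

/-! ### Weights of period four -/

lemma sum_range_zmod_sub {k : ℕ} [NeZero k] {M : Type*} [AddCommMonoid M] (w : ZMod k → M)
    (c : ZMod k) : ∑ i ∈ Finset.range k, w (c - i) = ∑ y, w y := by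
  refine Finset.sum_bij' (fun i _ => c - i) (fun y _ => (c - y).val) ?_ ?_ ?_ ?_ ?_
  · simp
  · simp [ZMod.val_lt]
  · intro i hi
    simpa using Nat.mod_eq_of_lt (Finset.mem_range.1 hi)
  · simp
  · simp

lemma sum_range_mul_add_zmod_sub {k : ℕ} [NeZero k] {M : Type*} [AddCommMonoid M]
    (w : ZMod k → M) (c : ZMod k) (q r : ℕ) :
    ∑ i ∈ Finset.range (k * q + r), w (c - i)
      = q • ∑ y, w y + ∑ i ∈ Finset.range r, w (c - i) := by
  induction q with
  | zero => simp
  | succ q ih =>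
    have h_shift : ∀ i ∈ Finset.range (k * q + r), w (c - (k + i : ℕ)) = w (c - i) := by simp
    rw [show k * (q + 1) + r = k + (k * q + r) by ring, Finset.sum_range_add,
      Finset.sum_congr rfl h_shift, ih, sum_range_zmod_sub, succ_nsmul', add_assoc]

lemma sum_zmod_four {M : Type*} [AddCommMonoid M] (w : ZMod 4 → M) :
    ∑ y, w y = w 0 + w 1 + w 2 + w 3 :=
  Fin.sum_univ_four w

lemma forall_zmod_four {P : ZMod 4 → Prop} : (∀ y, P y) ↔ P 0 ∧ P 1 ∧ P 2 ∧ P 3 :=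
  ⟨fun h => ⟨h 0, h 1, h 2, h 3⟩, fun ⟨h₀, h₁, h₂, h₃⟩ y => by fin_cases y <;> assumption⟩

/-- A weight of period four that grows by the factor `lam` under the folding recursion for
`s = 2 * (4 * q + r)`. For the class `y` of `m / 2`, the recursion at `m` runs over a window of
`4 * q + r + 1` or `4 * q + r` consecutive integers, according to the parity of `m`. -/
structure IsFoldingWeight (q r : ℕ) (lam : ℝ) (w : ZMod 4 → ℝ) : Prop where
  sq_le : ∀ y, lam ^ 2 ≤ 2 * w y
  le_sq : ∀ y, w y ≤ 2 * lam ^ 2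
  even_le : ∀ y, lam * w (2 * y) ≤
    2 * (q * ∑ z, w z + ∑ i ∈ Finset.range (r + 1), w (y - i))
  odd_le : ∀ y, lam * w (2 * y + 1) ≤ 2 * (q * ∑ z, w z + ∑ i ∈ Finset.range r, w (y - i))

lemma foldOp_zmod {k s m : ℕ} (w : ZMod k → ℝ) (hm : s ≤ m) :
    foldOp s (fun n => w n) m
      = 2 * ∑ i ∈ Finset.range ((s + 2 - m % 2) / 2), w ((m / 2 : ℕ) - i) := by
  rw [foldOp]
  congr 1
  refine Finset.sum_congr rfl fun i hi => ?_
  rw [Finset.mem_range] at hi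
  rw [Nat.cast_sub (by omega)]

lemma IsFoldingWeight.mul_le_foldOp {q r m : ℕ} {lam : ℝ} {w : ZMod 4 → ℝ}
    (hw : IsFoldingWeight q r lam w) (hm : 2 * (4 * q + r) ≤ m) :
    lam * w m ≤ foldOp (2 * (4 * q + r)) (fun n => w n) m := by
  rw [foldOp_zmod w hm]
  obtain ⟨n, rfl | rfl⟩ := m.even_or_odd'
  · rw [show (2 * (4 * q + r) + 2 - 2 * n % 2) / 2 = 4 * q + (r + 1) by omega,
      show 2 * n / 2 = n by omega, sum_range_mul_add_zmod_sub, nsmul_eq_mul]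
    exact_mod_cast hw.even_le n
  · rw [show (2 * (4 * q + r) + 2 - (2 * n + 1) % 2) / 2 = 4 * q + r by omega,
      show (2 * n + 1) / 2 = n by omega, sum_range_mul_add_zmod_sub, nsmul_eq_mul]
    exact_mod_cast hw.odd_le n

lemma IsFoldingWeight.rpow_le_f {a s q r : ℕ} {lam : ℝ} {w : ZMod 4 → ℝ}
    (hw : IsFoldingWeight q r lam w) (hsqr : s = 2 * (4 * q + r)) (ha : 2 ≤ a) (hs : 2 ≤ s)
    (hlam : 1 ≤ lam) (hlam_le : lam ≤ s + 1) {m : ℕ} (hm : 6 ≤ m) :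
    1 / 32 * (s : ℝ) ^ (-(Real.logb 2 ((s : ℝ) + 1)) - 3) * (m : ℝ) ^ (Real.logb 2 lam)
      ≤ (f (a ^ m) (a ^ s) : ℝ) := by
  subst hsqr
  exact rpow_le_f_of_weight ha hs hlam hlam_le (by positivity) (fun n => hw.le_sq n)
    (fun n => by linarith [hw.sq_le n]) (fun n hn => hw.mul_le_foldOp hn) hm

section Weights

/-- The function with values `w₀, w₁, w₂, w₃` on the residue classes modulo four. -/
def periodFour (w₀ w₁ w₂ w₃ : ℝ) : ZMod 4 → ℝ := ![w₀, w₁, w₂, w₃]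

variable {q : ℕ} {x : ℝ}

-- The class of `m` modulo four fixes only the parity of `m / 2`. When the window sum at `m` takes
-- two values for that parity, it is replaced by the smaller one; the weights below are eigenvectors
-- of the resulting linear system, scaled to have polynomial entries, and `hx` is its
-- characteristic equation.

lemma isFoldingWeight_mod_zero (h4 : 4 ≤ x) (hx : x ^ 3 = 8 * q * (x ^ 2 + x + 1)) :
    IsFoldingWeight q 0 x (periodFour (x ^ 2 + 2 * x + 4) (x ^ 2) (x ^ 2 + 2 * x) (x ^ 2)) := by
  constructor <;> simp only [forall_zmod_four, sum_zmod_four, Finset.sum_range_succ,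
      Finset.sum_range_zero] <;> push_cast <;> reduce_mod_char <;>
    simp only [periodFour, Matrix.cons_val] <;> refine ⟨?_, ?_, ?_, ?_⟩ <;> nlinarith

lemma isFoldingWeight_mod_two (h4 : 4 ≤ x)
    (hx : x ^ 3 - 4 * x ^ 2 + 4 * x = 8 * q * (x ^ 2 - x + 1)) :
    IsFoldingWeight q 1 x (periodFour (x ^ 2) (x ^ 2 - 2 * x + 4) (x ^ 2) (x ^ 2 - 2 * x)) := by
  constructor <;> simp only [forall_zmod_four, sum_zmod_four, Finset.sum_range_succ,
      Finset.sum_range_zero] <;> push_cast <;> reduce_mod_char <;>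
    simp only [periodFour, Matrix.cons_val] <;> refine ⟨?_, ?_, ?_, ?_⟩ <;> nlinarith

lemma isFoldingWeight_mod_four (h4 : 4 ≤ x)
    (hx : x ^ 3 - 6 * x ^ 2 + 4 * x + 8 = 8 * q * (x ^ 2 - x - 1)) :
    IsFoldingWeight q 2 x (periodFour (x ^ 2) (x ^ 2 - 2 * x) (x ^ 2 - 4) (x ^ 2 - 2 * x)) := by
  constructor <;> simp only [forall_zmod_four, sum_zmod_four, Finset.sum_range_succ,
      Finset.sum_range_zero] <;> push_cast <;> reduce_mod_char <;>
    simp only [periodFour, Matrix.cons_val] <;> refine ⟨?_, ?_, ?_, ?_⟩ <;> nlinarith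

lemma isFoldingWeight_mod_six (h4 : 4 ≤ x)
    (hx : x ^ 3 - 6 * x ^ 2 - 8 * x + 8 = 8 * q * (x ^ 2 + x - 1)) :
    IsFoldingWeight q 3 x (periodFour (x ^ 2 + 2 * x) (x ^ 2) (x ^ 2 + 2 * x) (x ^ 2 - 4)) := by
  constructor <;> simp only [forall_zmod_four, sum_zmod_four, Finset.sum_range_succ,
      Finset.sum_range_zero] <;> push_cast <;> reduce_mod_char <;>
    simp only [periodFour, Matrix.cons_val] <;> refine ⟨?_, ?_, ?_, ?_⟩ <;> nlinarith

end Weights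

/-! ### The polynomials `P_s` -/

namespace IsGreatestRoot

variable {p : ℝ → ℝ} {lam u v : ℝ}

lemma le_of_forall_ne (h : IsGreatestRoot p lam) (hv : ∀ x, v < x → p x ≠ 0) : lam ≤ v :=
  not_lt.1 fun hlt => hv lam hlt h.1

lemma le_of_sign_change (h : IsGreatestRoot p lam) (hp : Continuous p) (huv : u ≤ v)
    (hu : p u ≤ 0) (hv : 0 ≤ p v) : u ≤ lam := by
  obtain ⟨y, hy, hy₀⟩ := intermediate_value_Icc huv hp.continuousOn ⟨hu, hv⟩
  exact hy.1.trans (h.2 y hy₀)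

end IsGreatestRoot

section Polynomials

variable {s : ℕ}

lemma continuous_Ps : Continuous (Ps s) := by
  unfold Ps
  split_ifs <;> fun_prop

lemma Ps_pos {x : ℝ} (hx : s + 1 < x) : 0 < Ps s x := by
  obtain ⟨t, ht, rfl⟩ : ∃ t : ℝ, 0 < t ∧ x = s + 1 + t := ⟨x - s - 1, by linarith, by ring⟩
  have ht₂ : 0 < t ^ 2 := by positivity
  have ht₃ : 0 < t ^ 3 := by positivity
  have hst : 0 ≤ s * t := by positivity
  have hst₂ : 0 ≤ s * t ^ 2 := by positivity
  have hs₂t : 0 ≤ (s : ℝ) ^ 2 * t := by positivity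
  rw [Ps]
  split_ifs with h_odd h_two h_four
  · linarith
  · linarith [show (s : ℝ) = 2 by exact_mod_cast h_two]
  · nlinarith [show (s : ℝ) = 4 by exact_mod_cast h_four]
  all_goals nlinarith

lemma Ps_four_nonpos (hs : 4 ≤ s) (h_even : s % 2 = 0) : Ps s 4 ≤ 0 := by
  have hs' : (4 : ℝ) ≤ s := by exact_mod_cast hs
  rw [Ps]
  split_ifs
  · omega
  · omega
  all_goals linarith

lemma four_le_greatestRoot_Ps {lam : ℝ} (hs : 4 ≤ s) (h_even : s % 2 = 0)
    (hlam : IsGreatestRoot (Ps s) lam) : 4 ≤ lam := by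
  have hs' : (4 : ℝ) ≤ s := by exact_mod_cast hs
  exact hlam.le_of_sign_change continuous_Ps (by linarith) (Ps_four_nonpos hs h_even)
    (Ps_pos (lt_add_one (s + 1 : ℝ))).le

lemma greatestRoot_Ps_le {lam : ℝ} (hlam : IsGreatestRoot (Ps s) lam) : lam ≤ s + 1 :=
  hlam.le_of_forall_ne fun _ hx => (Ps_pos hx).ne'

lemma exists_isFoldingWeight {q r : ℕ} {x : ℝ} (hs : 4 ≤ s) (hsqr : s = 2 * (4 * q + r))
    (hr : r < 4) (h4 : 4 ≤ x) (hx : Ps s x = 0) : ∃ w, IsFoldingWeight q r x w := by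
  have hs' : (s : ℝ) = 2 * (4 * q + r) := by exact_mod_cast hsqr
  rw [Ps] at hx
  split_ifs at hx
  · omega
  · omega
  · obtain ⟨rfl, rfl⟩ : q = 0 ∧ r = 2 := by omega
    refine ⟨_, isFoldingWeight_mod_four h4 ?_⟩
    -- the cubic of this residue class is `(x - 2) * (x ^ 2 - 4 * x - 4)` at `s = 4`
    linear_combination (x - 2) * hx
  · obtain rfl : r = 0 := by omega
    exact ⟨_, isFoldingWeight_mod_zero h4 (by linear_combination hx + (x ^ 2 + x + 1) * hs')⟩
  · obtain rfl : r = 1 := by omega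
    exact ⟨_, isFoldingWeight_mod_two h4 (by linear_combination hx + (x ^ 2 - x + 1) * hs')⟩
  · obtain rfl : r = 2 := by omega
    exact ⟨_, isFoldingWeight_mod_four h4 (by linear_combination hx + (x ^ 2 - x - 1) * hs')⟩
  · obtain rfl : r = 3 := by omega
    exact ⟨_, isFoldingWeight_mod_six h4 (by linear_combination hx + (x ^ 2 + x - 1) * hs')⟩

end Polynomials

theorem theorem1_general {a s : ℕ} (ha : 2 ≤ a) (hs : 2 ≤ s) {lam : ℝ}
    (hlam : IsGreatestRoot (Ps s) lam) {m : ℕ} (hm : 6 ≤ m) :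
    1 / 32 * (s : ℝ) ^ (-(Real.logb 2 ((s : ℝ) + 1)) - 3) * (m : ℝ) ^ (Real.logb 2 lam)
      ≤ (f (a ^ m) (a ^ s) : ℝ) := by
  by_cases h_const : s % 2 = 1 ∨ s = 2
  · have hlam_eq : lam = (2 * ((s + 1) / 2) : ℕ) := by
      have h_root := hlam.1
      obtain h_odd | rfl := h_const
      · rw [Ps, if_pos h_odd] at h_root
        rw [show 2 * ((s + 1) / 2) = s + 1 by omega]
        push_cast
        linarith
      · norm_num [Ps] at h_root ⊢
        linarith
    exact hlam_eq ▸ rpow_le_f_of_constant_weight ha hs hm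
  · have hs₄ : 4 ≤ s := by omega
    have hsqr : s = 2 * (4 * (s / 8) + s % 8 / 2) := by omega
    have h4 := four_le_greatestRoot_Ps hs₄ (by omega) hlam
    obtain ⟨w, hw⟩ := exists_isFoldingWeight hs₄ hsqr (by omega) h4 hlam.1
    exact hw.rpow_le_f hsqr ha hs (by linarith) (greatestRoot_Ps_le hlam) hm

theorem theorem1 :
    ∃ c : ℝ, 0 < c ∧
      ∀ a s : ℕ, 2 ≤ a → 2 ≤ s →
        ∀ lam : ℝ, IsGreatestRoot (Ps s) lam →
          ∃ M : ℕ, ∀ m : ℕ, M ≤ m →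
            c * (s : ℝ) ^ (-(Real.logb 2 ((s : ℝ) + 1)) - 3) *
                (m : ℝ) ^ (Real.logb 2 lam) ≤ (f (a ^ m) (a ^ s) : ℝ) :=
  ⟨1 / 32, by norm_num, fun _ _ ha hs _ hlam => ⟨6, fun _ hm => theorem1_general ha hs hlam hm⟩⟩
end

section
/- There exists s₀ such that for every even integer s ≥ s₀: if s ≡ 0 (mod 8) then the largest real root λ₁ of x³ − s·x² − s·x − s satisfies s + 1 − 1/s² < λ₁ < s + 1; and if s ≡ 6 (mod 8) then the largest real root λ₄ of x³ − s·x² − (s+2)x + (s+2) satisfies s + 1 − 1/s² < λ₄ < s + 1. -/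
/-!
The two cubics are `(x - (s + 1)) * (x ^ 2 + x + k) + 1` with `k = 1` and `k = -1`, so each root
satisfies `(s + 1 - x) * (x ^ 2 + x + k) = 1`. The quadratic factor is positive for `x ≥ s + 1`, so
no root lies there, and it exceeds `s ^ 2` for `x ≥ s`, so the cubic is still negative at
`s + 1 - 1 / s ^ 2`; the largest root lies in between.
-/

namespace IsGreatestRoot

variable {p : ℝ → ℝ} {a b lam : ℝ}

theorem lt_of_forall_ge_pos (h : IsGreatestRoot p lam) (hp : ∀ x, a ≤ x → 0 < p x) : lam < a := by
  by_contra! hle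
  exact (hp lam hle).ne' h.1

theorem gt_of_neg_of_pos (h : IsGreatestRoot p lam) (hab : a ≤ b)
    (hp : ContinuousOn p (Set.Icc a b)) (ha : p a < 0) (hb : 0 < p b) : a < lam := by
  obtain ⟨x, hx, hx0⟩ := intermediate_value_Ioo hab hp ⟨ha, hb⟩
  exact hx.1.trans_le (h.2 x hx0)

end IsGreatestRoot

theorem sq_lt_sq_add_self_add {s k x : ℝ} (hs : 0 ≤ s) (hk : 0 < s + k) (hx : s ≤ x) :
    s ^ 2 < x ^ 2 + x + k := by
  have hsq : s ^ 2 ≤ x ^ 2 := pow_le_pow_left₀ hs hx 2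
  linarith

theorem IsGreatestRoot.bounds_of_linear_mul_quadratic_add_one {s k lam : ℝ} (hs : 1 ≤ s)
    (hk : 0 < s + k)
    (h : IsGreatestRoot (fun x ↦ (x - (s + 1)) * (x ^ 2 + x + k) + 1) lam) :
    s + 1 - 1 / s ^ 2 < lam ∧ lam < s + 1 := by
  have hs0 : 0 < s := by linarith
  have hquad {x : ℝ} (hx : s ≤ x) : s ^ 2 < x ^ 2 + x + k :=
    sq_lt_sq_add_self_add hs0.le hk hx
  have hpos (x : ℝ) (hx : s + 1 ≤ x) : 0 < (x - (s + 1)) * (x ^ 2 + x + k) + 1 := by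
    have hq : 0 < x ^ 2 + x + k := (sq_nonneg s).trans_lt (hquad (by linarith))
    exact add_pos_of_nonneg_of_pos (mul_nonneg (sub_nonneg.2 hx) hq.le) one_pos
  refine ⟨h.gt_of_neg_of_pos (b := s + 1) ?_ (by fun_prop) ?_ (hpos _ le_rfl),
    h.lt_of_forall_ge_pos hpos⟩
  · exact sub_le_self _ (by positivity)
  · set x := s + 1 - 1 / s ^ 2 with hx
    have hdist : x - (s + 1) = -(1 / s ^ 2) := by rw [hx]; ring
    have hsx : s ≤ x := by
      have : 1 / s ^ 2 ≤ 1 := div_le_one_of_le₀ (one_le_pow₀ hs) (sq_nonneg s)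
      linarith
    calc (x - (s + 1)) * (x ^ 2 + x + k) + 1
        = 1 - (x ^ 2 + x + k) / s ^ 2 := by rw [hdist]; ring
      _ < 0 := sub_neg.2 ((one_lt_div (by positivity)).2 (hquad hsx))

theorem root_estimates_cases_0_and_6_general {s : ℝ} (hs : 1 < s) :
    (∀ lam : ℝ, IsGreatestRoot (fun x ↦ x ^ 3 - s * x ^ 2 - s * x - s) lam →
      s + 1 - 1 / s ^ 2 < lam ∧ lam < s + 1) ∧
    (∀ lam : ℝ, IsGreatestRoot (fun x ↦ x ^ 3 - s * x ^ 2 - (s + 2) * x + (s + 2)) lam →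
      s + 1 - 1 / s ^ 2 < lam ∧ lam < s + 1) := by
  refine ⟨fun lam h ↦ ?_, fun lam h ↦ ?_⟩
  · refine IsGreatestRoot.bounds_of_linear_mul_quadratic_add_one (k := 1) hs.le (by linarith) ?_
    convert h using 2
    ring
  · refine IsGreatestRoot.bounds_of_linear_mul_quadratic_add_one (k := -1) hs.le (by linarith) ?_
    convert h using 2
    ring

theorem root_estimates_cases_0_and_6 :
    ∃ s₀ : ℤ, ∀ s : ℤ, s₀ ≤ s → s % 2 = 0 →
      (s % 8 = 0 →
        ∀ lam : ℝ,
          IsGreatestRoot (fun x : ℝ =>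
            x ^ 3 - (s : ℝ) * x ^ 2 - (s : ℝ) * x - (s : ℝ)) lam →
          (s : ℝ) + 1 - 1 / (s : ℝ) ^ 2 < lam ∧ lam < (s : ℝ) + 1) ∧
      (s % 8 = 6 →
        ∀ lam : ℝ,
          IsGreatestRoot (fun x : ℝ =>
            x ^ 3 - (s : ℝ) * x ^ 2 - ((s : ℝ) + 2) * x + ((s : ℝ) + 2)) lam →
          (s : ℝ) + 1 - 1 / (s : ℝ) ^ 2 < lam ∧ lam < (s : ℝ) + 1) := by
  refine ⟨2, fun s hs _ ↦ ?_⟩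
  have h := root_estimates_cases_0_and_6_general (s := s) (by exact_mod_cast hs)
  exact ⟨fun _ ↦ h.1, fun _ ↦ h.2⟩
end

section
/- There exists s₀ such that for every integer s ≥ s₀ with s ≡ 4 (mod 8), the largest real root λ₃ of the polynomial x³ − (s+2)x² + s·x + (s+4) satisfies s + 1 − 3/s² + 3/s³ − 9/s⁴ < λ₃ < s + 1 − 3/s² + 3/s³ − 6/s⁴. -/
theorem IsGreatestRoot.lt_of_neg_of_nonneg {p : ℝ → ℝ} {lam a b : ℝ} (h : IsGreatestRoot p lam)
    (hab : a ≤ b) (hp : ContinuousOn p (Set.Icc a b)) (ha : p a < 0) (hb : 0 ≤ p b) :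
    a < lam := by
  obtain ⟨x, hx, hx0⟩ := intermediate_value_Ioc hab hp ⟨ha, hb⟩
  exact hx.1.trans_le (h.2 x hx0)

/-- The cubic, with parameter `s`, whose largest real root is estimated. -/
def rootCubic (s x : ℝ) : ℝ :=
  x ^ 3 - (s + 2) * x ^ 2 + s * x + (s + 4)

/-- The expansion of the largest root of `rootCubic s` in powers of `1 / s`, cut off at order four,
where the coefficient is left free as `-c` in order to bracket the root. -/
noncomputable def rootExpansion (s c : ℝ) : ℝ :=
  s + 1 - 3 / s ^ 2 + 3 / s ^ 3 - c / s ^ 4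

section

variable {s t c : ℝ}

theorem continuous_rootCubic : Continuous (rootCubic s) := by
  unfold rootCubic
  fun_prop

theorem rootCubic_add_one : rootCubic s (s + 1) = 3 := by
  unfold rootCubic
  ring

theorem strictMonoOn_rootCubic (hs : 3 ≤ s) : StrictMonoOn (rootCubic s) (Set.Ici s) := by
  intro x hx y _ hxy
  have hu : 0 ≤ x - s := sub_nonneg.2 hx
  have hv : 0 < y - s := sub_pos.2 (lt_of_le_of_lt hx hxy)
  have divided_difference : rootCubic s y - rootCubic s x = (y - x) *
      ((x - s) ^ 2 + (x - s) * (y - s) + (y - s) ^ 2 + 2 * (s - 1) * ((x - s) + (y - s))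
        + s * (s - 3)) := by
    unfold rootCubic
    ring
  have : 0 < s - 1 := by linarith
  have : 0 ≤ s * (s - 3) := mul_nonneg (by linarith) (by linarith)
  rw [← sub_pos, divided_difference]
  exact mul_pos (sub_pos.2 hxy) (by positivity)

theorem rootCubic_rescaled (hst : s * t = 1) (g : ℝ) :
    rootCubic s (s + 1 + t ^ 2 * g) =
      3 + (1 + t - t ^ 2) * g + (2 + t) * t ^ 3 * g ^ 2 + t ^ 6 * g ^ 3 := by
  unfold rootCubic
  linear_combination ((s * t + 1) * g + t * g + 2 * t ^ 3 * g ^ 2) * hst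

theorem rootExpansion_eq_rescaled (hst : s * t = 1) :
    rootExpansion s c = s + 1 + t ^ 2 * (-3 + 3 * t - c * t ^ 2) := by
  obtain rfl : t = s⁻¹ := eq_inv_of_mul_eq_one_right hst
  unfold rootExpansion
  ring

theorem rootCubic_rootExpansion (hst : s * t = 1) {g : ℝ} (hg : g = -3 + 3 * t - c * t ^ 2) :
    rootCubic s (rootExpansion s c) =
      t ^ 2 * (6 - c - (3 + c) * t + c * t ^ 2 + (2 + t) * t * g ^ 2 + t ^ 4 * g ^ 3) := by
  rw [rootExpansion_eq_rescaled hst, ← hg, rootCubic_rescaled hst]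
  linear_combination (1 + t - t ^ 2) * hg

theorem rootExpansion_le_add_one (hs : 1 ≤ s) (hc : 0 ≤ c) : rootExpansion s c ≤ s + 1 := by
  have h₃ : 3 / s ^ 3 ≤ 3 / s ^ 2 := by
    gcongr
    norm_num
  have h₄ : 0 ≤ c / s ^ 4 := by positivity
  unfold rootExpansion
  linarith

theorem lt_rootExpansion (hs : 2 ≤ s) (hc : c ≤ s ^ 2) : s < rootExpansion s c := by
  have : 0 < s := by linarith
  have h₂ : 4 / s ^ 2 ≤ 1 := (div_le_one (by positivity)).2 (by nlinarith)
  have h₃ : 0 < 3 / s ^ 3 := by positivity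
  have h₄ : c / s ^ 4 ≤ 1 / s ^ 2 := by
    calc c / s ^ 4 ≤ s ^ 2 / s ^ 4 := by gcongr
      _ = 1 / s ^ 2 := by field_simp
  have hsum : 4 / s ^ 2 = 3 / s ^ 2 + 1 / s ^ 2 := by ring
  unfold rootExpansion
  linarith

theorem rootCubic_rootExpansion_nine_neg (hst : s * t = 1) (ht₀ : 0 < t) (ht : t ≤ 1 / 4) :
    rootCubic s (rootExpansion s 9) < 0 := by
  obtain ⟨g, hg⟩ : ∃ g, g = -3 + 3 * t - 9 * t ^ 2 := ⟨_, rfl⟩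
  have hg_lower : -3 ≤ g := by nlinarith
  have hg_upper : g ≤ 0 := by nlinarith
  have hg_sq : g ^ 2 ≤ 9 := by nlinarith
  have hg_cube : g ^ 3 ≤ 0 := Odd.pow_nonpos (by decide) hg_upper
  rw [rootCubic_rootExpansion hst hg]
  refine mul_neg_of_pos_of_neg (by positivity) ?_
  calc 6 - 9 - (3 + 9) * t + 9 * t ^ 2 + (2 + t) * t * g ^ 2 + t ^ 4 * g ^ 3
      ≤ 6 - 9 - (3 + 9) * t + 9 * t ^ 2 + (2 + t) * t * 9 + t ^ 4 * 0 := by gcongr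
    _ = -3 + 6 * t + 18 * t ^ 2 := by ring
    _ < 0 := by nlinarith

theorem rootCubic_rootExpansion_six_pos (hst : s * t = 1) (ht₀ : 0 < t) (ht : t ≤ 1 / 4) :
    0 < rootCubic s (rootExpansion s 6) := by
  obtain ⟨g, hg⟩ : ∃ g, g = -3 + 3 * t - 6 * t ^ 2 := ⟨_, rfl⟩
  have hg_lower : -3 ≤ g := by nlinarith
  have hg_upper : g ≤ -5 / 2 := by nlinarith
  have hg_sq : 25 / 4 ≤ g ^ 2 := by nlinarith
  have hg_cube : (-3) ^ 3 ≤ g ^ 3 := Odd.pow_le_pow (by decide) |>.2 hg_lower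
  have ht_cube : t ^ 3 ≤ (1 / 4) ^ 3 := by gcongr
  have factor_pos : 0 < -9 + 6 * t + (2 + t) * g ^ 2 + t ^ 3 * g ^ 3 := by
    calc 0 < -9 + 6 * t + (2 + t) * (25 / 4) + t ^ 3 * (-3) ^ 3 := by linarith
      _ ≤ -9 + 6 * t + (2 + t) * g ^ 2 + t ^ 3 * g ^ 3 := by gcongr
  calc 0 < t ^ 3 * (-9 + 6 * t + (2 + t) * g ^ 2 + t ^ 3 * g ^ 3) := by positivity
    _ = rootCubic s (rootExpansion s 6) := by
      rw [rootCubic_rootExpansion hst hg]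
      ring

theorem root_estimate_case_4_general (hs : 4 ≤ s) {lam : ℝ}
    (hlam : IsGreatestRoot (fun x ↦ x ^ 3 - (s + 2) * x ^ 2 + s * x + (s + 4)) lam) :
    s + 1 - 3 / s ^ 2 + 3 / s ^ 3 - 9 / s ^ 4 < lam ∧
      lam < s + 1 - 3 / s ^ 2 + 3 / s ^ 3 - 6 / s ^ 4 := by
  change IsGreatestRoot (rootCubic s) lam at hlam
  change rootExpansion s 9 < lam ∧ lam < rootExpansion s 6
  have hst : s * (1 / s) = 1 := mul_one_div_cancel (by linarith)
  have ht₀ : 0 < 1 / s := one_div_pos.2 (by linarith)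
  have ht : 1 / s ≤ 1 / 4 := by gcongr
  have lower : rootExpansion s 9 < lam :=
    hlam.lt_of_neg_of_nonneg (rootExpansion_le_add_one (by linarith) (by norm_num))
      continuous_rootCubic.continuousOn (rootCubic_rootExpansion_nine_neg hst ht₀ ht)
      (by norm_num [rootCubic_add_one])
  have s_lt_lam : s < lam := (lt_rootExpansion (by linarith) (by nlinarith)).trans lower
  have s_lt_upper : s < rootExpansion s 6 := lt_rootExpansion (by linarith) (by nlinarith)
  have strictMono := strictMonoOn_rootCubic (s := s) (by linarith)
  refine ⟨lower, (strictMono.lt_iff_lt s_lt_lam.le s_lt_upper.le).1 ?_⟩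
  exact hlam.1.trans_lt (rootCubic_rootExpansion_six_pos hst ht₀ ht)

end

theorem root_estimate_case_4 :
    ∃ s₀ : ℤ, ∀ s : ℤ, s₀ ≤ s → s % 8 = 4 →
      ∀ lam : ℝ,
        IsGreatestRoot (fun x : ℝ =>
          x ^ 3 - ((s : ℝ) + 2) * x ^ 2 + (s : ℝ) * x + ((s : ℝ) + 4)) lam →
        (s : ℝ) + 1 - 3 / (s : ℝ) ^ 2 + 3 / (s : ℝ) ^ 3 - 9 / (s : ℝ) ^ 4 < lam ∧
          lam < (s : ℝ) + 1 - 3 / (s : ℝ) ^ 2 + 3 / (s : ℝ) ^ 3 - 6 / (s : ℝ) ^ 4 :=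
  ⟨4, fun _ hs _ _ hlam ↦ root_estimate_case_4_general (mod_cast hs) hlam⟩
end

section
/- There exists s₀ such that for every integer s ≥ s₀, the largest real root of x³ − (s+2)x² + s·x + (s+4) is strictly smaller than each of: the largest real root of x³ − s·x² − s·x − s, the largest real root of x³ − (s+2)x² + (s+2)x − (s−2), the largest real root of x³ − s·x² − (s+2)x + (s+2), and the number s + 1. -/
lemma lt_of_sub_mul_pos {R : Type*} [Ring R] [LinearOrder R] [IsOrderedRing R] {b x k : R}
    (h : 0 < (b - x) * k) (hk : b ≤ x → 0 ≤ k) : x < b :=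
  lt_of_not_ge fun hbx =>
    h.not_ge (mul_nonpos_of_nonpos_of_nonneg (sub_nonpos.2 hbx) (hk hbx))

namespace IsGreatestRoot

lemma congr {p q : ℝ → ℝ} {lam : ℝ} (h : IsGreatestRoot p lam) (hpq : ∀ x, p x = q x) :
    IsGreatestRoot q lam :=
  funext hpq ▸ h

lemma lt_of_neg_of_pos {p : ℝ → ℝ} {lam a b : ℝ} (h : IsGreatestRoot p lam)
    (hp : ContinuousOn p (Set.Icc a b)) (hab : a ≤ b) (ha : p a < 0) (hb : 0 < p b) :
    a < lam := by
  obtain ⟨x, hx, hx0⟩ := intermediate_value_Ioo hab hp ⟨ha, hb⟩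
  exact hx.1.trans_le (h.2 x hx0)

variable {q : ℝ → ℝ} {b c lam : ℝ}

lemma lt_of_lt_sub_mul {a : ℝ} (h : IsGreatestRoot (fun x => c - (b - x) * q x) lam)
    (hq : ContinuousOn q (Set.Icc a b)) (hc : 0 < c) (hab : a ≤ b) (ha : c < (b - a) * q a) :
    a < lam :=
  h.lt_of_neg_of_pos (by fun_prop) hab (sub_neg.2 ha) (by simpa using hc)

lemma lt_of_le_sub_mul_of_lt {x k : ℝ}
    (h : IsGreatestRoot (fun y => c - (b - y) * q y) lam) (hq : ContinuousOn q (Set.Icc x b))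
    (hc : 0 < c) (hxb : x < b) (hx : c ≤ (b - x) * k) (hk : k < q x) : x < lam :=
  h.lt_of_lt_sub_mul hq hc hxb.le (hx.trans_lt (mul_lt_mul_of_pos_left hk (sub_pos.2 hxb)))

end IsGreatestRoot

theorem root_comparison_general {r lam3 lam1 lam2 lam4 : ℝ} (hr : 1 ≤ r)
    (h3 : lam3 ^ 3 - (r + 2) * lam3 ^ 2 + r * lam3 + (r + 4) = 0)
    (h1 : IsGreatestRoot (fun x => x ^ 3 - r * x ^ 2 - r * x - r) lam1)
    (h2 : IsGreatestRoot (fun x => x ^ 3 - (r + 2) * x ^ 2 + (r + 2) * x - (r - 2)) lam2)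
    (h4 : IsGreatestRoot (fun x => x ^ 3 - r * x ^ 2 - (r + 2) * x + (r + 2)) lam4) :
    lam3 < lam1 ∧ lam3 < lam2 ∧ lam3 < lam4 ∧ lam3 < r + 1 := by
  replace h3 : (r + 1 - lam3) * (lam3 ^ 2 - lam3 - 1) = 3 := by linear_combination -h3
  replace h1 : IsGreatestRoot (fun x => 1 - (r + 1 - x) * (x ^ 2 + x + 1)) lam1 :=
    h1.congr fun x => by ring
  replace h2 : IsGreatestRoot (fun x => 3 - (r + 1 - x) * (x ^ 2 - x + 1)) lam2 :=
    h2.congr fun x => by ring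
  replace h4 : IsGreatestRoot (fun x => 1 - (r + 1 - x) * (x ^ 2 + x - 1)) lam4 :=
    h4.congr fun x => by ring
  have h4_eq : (r + 1 - lam4) * (lam4 ^ 2 + lam4 - 1) = 1 := (sub_eq_zero.1 h4.1).symm
  have h3b : lam3 < r + 1 := lt_of_sub_mul_pos (h3 ▸ three_pos) fun _ => by nlinarith
  have h4b : lam4 < r + 1 := lt_of_sub_mul_pos (h4_eq ▸ one_pos) fun _ => by nlinarith
  have h32 : lam3 < lam2 :=
    h2.lt_of_le_sub_mul_of_lt (by fun_prop) three_pos h3b h3.ge (by linarith)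
  have h41 : lam4 < lam1 :=
    h1.lt_of_le_sub_mul_of_lt (by fun_prop) one_pos h4b h4_eq.ge (by linarith)
  have h34 : lam3 < lam4 := by
    rcases le_or_gt lam3 0 with h_nonpos | h_pos
    · have h4_low : 3 / 2 < lam4 :=
        h4.lt_of_lt_sub_mul (by fun_prop) one_pos (by linarith) (by linarith)
      linarith
    · have h3_ge : 1 ≤ (r + 1 - lam3) * (lam3 ^ 2 - lam3 - 1) := by linarith
      exact h4.lt_of_le_sub_mul_of_lt (by fun_prop) one_pos h3b h3_ge (by linarith)
  exact ⟨h34.trans h41, h32, h34, h3b⟩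

theorem root_comparison :
    ∃ s₀ : ℤ, ∀ s : ℤ, s₀ ≤ s →
      ∀ lam3 lam1 lam2 lam4 : ℝ,
        IsGreatestRoot (fun x : ℝ =>
          x ^ 3 - ((s : ℝ) + 2) * x ^ 2 + (s : ℝ) * x + ((s : ℝ) + 4)) lam3 →
        IsGreatestRoot (fun x : ℝ =>
          x ^ 3 - (s : ℝ) * x ^ 2 - (s : ℝ) * x - (s : ℝ)) lam1 →
        IsGreatestRoot (fun x : ℝ =>
          x ^ 3 - ((s : ℝ) + 2) * x ^ 2 + ((s : ℝ) + 2) * x - ((s : ℝ) - 2)) lam2 →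
        IsGreatestRoot (fun x : ℝ =>
          x ^ 3 - (s : ℝ) * x ^ 2 - ((s : ℝ) + 2) * x + ((s : ℝ) + 2)) lam4 →
        lam3 < lam1 ∧ lam3 < lam2 ∧ lam3 < lam4 ∧ lam3 < (s : ℝ) + 1 :=
  ⟨1, fun _ hs _ _ _ _ h3 h1 h2 h4 => root_comparison_general (mod_cast hs) h3.1 h1 h2 h4⟩
end

section
/- Let A = [[2,1,1],[2,0,1],[1,1,1]], let λ be the largest real eigenvalue of the matrix 2A, let B = A⁵ + [[0,1,−1],[0,1,−1],[0,1,−1]], and let μ be the largest real eigenvalue of B. Then 2·μ^{1/5} − λ > 0.0000756. -/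
/-!
The positive vector `v = (768, 597, 548)`, a rounded Perron eigenvector of `2A`, satisfies
`2A v ≤ 6.9818 v` entrywise, so the Collatz–Wielandt bound gives `λ ≤ 6.9818`. The characteristic
polynomial of `B`, `x³ - 518x² - 245x - 56`, is negative at `3.49095⁵`, so it has a larger root and
`2 μ^{1/5} ≥ 6.9819`.
-/

open Matrix

section CharpolyRoots

variable {n : Type*} [Fintype n] [DecidableEq n] {M : Matrix n n ℝ}

-- Scaling the columns of `x - M` by `v` makes it strictly diagonally dominant as soon as `c < x`.
theorem le_of_charpoly_isRoot_of_mulVec_le {v : n → ℝ} {c x : ℝ}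
    (hM : ∀ i j, i ≠ j → 0 ≤ M i j) (hv : ∀ i, 0 < v i) (hMv : M *ᵥ v ≤ c • v)
    (hx : M.charpoly.IsRoot x) : x ≤ c := by
  by_contra! hcx
  have hdom : ((scalar n x - M) * diagonal v).det ≠ 0 := by
    refine det_ne_zero_of_sum_row_lt_diag fun k ↦ ?_
    have hoff : ∀ j ∈ Finset.univ.erase k,
        ‖((scalar n x - M) * diagonal v) k j‖ = M k j * v j := by
      intro j hj
      have hkj : k ≠ j := (Finset.ne_of_mem_erase hj).symm
      simp [hkj, abs_of_nonneg (hM k j hkj), abs_of_pos (hv j)]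
    calc ∑ j ∈ Finset.univ.erase k, ‖((scalar n x - M) * diagonal v) k j‖
        = (M *ᵥ v) k - M k k * v k := by
          rw [Finset.sum_congr rfl hoff, Finset.sum_erase_eq_sub (Finset.mem_univ k)]
          rfl
      _ ≤ c * v k - M k k * v k := sub_le_sub_right (hMv k) _
      _ < x * v k - M k k * v k := sub_lt_sub_right (mul_lt_mul_of_pos_right hcx (hv k)) _
      _ = ((scalar n x - M) * diagonal v) k k := by simp [sub_mul]
      _ ≤ ‖((scalar n x - M) * diagonal v) k k‖ := Real.le_norm_self _
  rw [det_mul, ← eval_charpoly, hx.eq_zero, zero_mul] at hdom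
  exact hdom rfl

theorem le_of_charpoly_eval_nonpos {a b : ℝ} (ha : M.charpoly.eval a ≤ 0)
    (hb : ∀ x, M.charpoly.IsRoot x → x ≤ b) : a ≤ b := by
  by_contra! hba
  have hlc : 0 ≤ M.charpoly.leadingCoeff := by
    rw [M.charpoly_monic.leadingCoeff]
    exact zero_le_one
  exact ha.not_gt <| Polynomial.zero_lt_eval_of_roots_lt_of_leadingCoeff_nonneg
    (fun x hx ↦ (hb x hx).trans_lt hba) hlc

end CharpolyRoots

theorem le_of_charpoly_two_smul_isRoot {x : ℝ}
    (hx : ((2 : ℝ) • !![(2 : ℝ), 1, 1; 2, 0, 1; 1, 1, 1]).charpoly.IsRoot x) : x ≤ 6.9818 := by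
  refine le_of_charpoly_isRoot_of_mulVec_le (v := ![768, 597, 548]) ?_ ?_ ?_ hx
  · intro i j _
    fin_cases i <;> fin_cases j <;> simp
  · intro i
    fin_cases i <;> simp
  · intro i
    fin_cases i <;> simp [mulVec, dotProduct, Fin.sum_univ_three] <;> norm_num

theorem pow_five_add_eq :
    !![(2 : ℝ), 1, 1; 2, 0, 1; 1, 1, 1] ^ 5 + !![0, 1, -1; 0, 1, -1; 0, 1, -1] =
      !![293, 134, 170; 228, 104, 132; 209, 96, 121] := by
  norm_num [pow_succ]

theorem eval_charpoly_pow_five_add (x : ℝ) :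
    (!![(2 : ℝ), 1, 1; 2, 0, 1; 1, 1, 1] ^ 5 + !![0, 1, -1; 0, 1, -1; 0, 1, -1]).charpoly.eval x =
      x ^ 3 - 518 * x ^ 2 - 245 * x - 56 := by
  rw [pow_five_add_eq, eval_charpoly, det_fin_three]
  simp only [scalar_apply, Matrix.sub_apply, diagonal_apply, of_apply, cons_val', cons_val_zero,
    cons_val_fin_one, cons_val_one, cons_val, Fin.isValue, Fin.reduceEq, zero_ne_one, one_ne_zero,
    reduceIte]
  ring

theorem eigenvalue_comparison
    (A : Matrix (Fin 3) (Fin 3) ℝ) (hA : A = !![2, 1, 1; 2, 0, 1; 1, 1, 1])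
    (B : Matrix (Fin 3) (Fin 3) ℝ)
    (hB : B = A ^ 5 + !![0, 1, -1; 0, 1, -1; 0, 1, -1])
    (lam : ℝ) (hlamroot : ((2 : ℝ) • A).charpoly.IsRoot lam)
    (hlammax : ∀ x : ℝ, ((2 : ℝ) • A).charpoly.IsRoot x → x ≤ lam)
    (μ : ℝ) (hμroot : B.charpoly.IsRoot μ)
    (hμmax : ∀ x : ℝ, B.charpoly.IsRoot x → x ≤ μ) :
    2 * μ ^ ((1 : ℝ) / 5) - lam > 0.0000756 := by
  subst hA hB
  have hlam : lam ≤ 6.9818 := le_of_charpoly_two_smul_isRoot hlamroot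
  have hμ : (3.49095 : ℝ) ^ 5 ≤ μ := by
    refine le_of_charpoly_eval_nonpos ?_ hμmax
    rw [eval_charpoly_pow_five_add]
    norm_num
  have hroot : (3.49095 : ℝ) ≤ μ ^ ((1 : ℝ) / 5) := by
    have hμ_nonneg : 0 ≤ μ := le_trans (by positivity) hμ
    rw [one_div, Real.le_rpow_inv_iff_of_pos (by norm_num) hμ_nonneg (by norm_num)]
    exact_mod_cast hμ
  linarith
end

section
/- Let M be a 3×3 real matrix all of whose entries are nonnegative, and let λ > 0 be a real eigenvalue of M (i.e. there exists a nonzero vector x ∈ ℝ³ with M·x = λ·x). Then for every natural number n there exist indices i, j such that the (i,j) entry of Mⁿ is at least λⁿ/3. -/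
/-!
Let `A *ᵥ x = μ • x` with `x ≠ 0`, and let `i` be an index at which `‖x i‖` is maximal. Comparing
the `i`-th coordinates gives `‖μ‖ * ‖x i‖ ≤ (∑ j, ‖A i j‖) * ‖x i‖`, so the `i`-th row has absolute
sum at least `‖μ‖`. Since `x` is also an eigenvector of `A ^ n`, with eigenvalue `μ ^ n`, the same
row `i` serves for all powers; one of its entries is at least the average.
-/

open Matrix

section RowSum

variable {ι R : Type*} [Fintype ι]

theorem norm_le_row_sum_of_mulVec_eq_smul [NormedRing R] [NormMulClass R] {A : Matrix ι ι R}
    {μ : R} {x : ι → R} (hx : A *ᵥ x = μ • x) {i : ι} (hi : x i ≠ 0)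
    (hmax : ∀ j, ‖x j‖ ≤ ‖x i‖) : ‖μ‖ ≤ ∑ j, ‖A i j‖ := by
  refine le_of_mul_le_mul_right ?_ (norm_pos_iff.mpr hi)
  calc ‖μ‖ * ‖x i‖ = ‖∑ j, A i j * x j‖ := by
        rw [← norm_mul]
        exact congrArg norm (congrFun hx i).symm
    _ ≤ ∑ j, ‖A i j‖ * ‖x j‖ := norm_sum_le_of_le _ fun j _ => norm_mul_le _ _
    _ ≤ ∑ j, ‖A i j‖ * ‖x i‖ := by gcongr with j; exact hmax j
    _ = (∑ j, ‖A i j‖) * ‖x i‖ := (Finset.sum_mul _ _ _).symm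

theorem exists_forall_norm_pow_le_row_sum [DecidableEq ι] [NormedCommRing R] [NormOneClass R]
    [NormMulClass R] {A : Matrix ι ι R} {μ : R} (hμ : Module.End.HasEigenvalue (toLin' A) μ) :
    ∃ i, ∀ n : ℕ, ‖μ‖ ^ n ≤ ∑ j, ‖(A ^ n) i j‖ := by
  obtain ⟨x, hx⟩ := hμ.exists_hasEigenvector
  obtain ⟨k, hk⟩ := Function.ne_iff.mp hx.2
  have : Nonempty ι := ⟨k⟩
  obtain ⟨i, hmax⟩ := Finite.exists_max fun j => ‖x j‖
  have hi : x i ≠ 0 := norm_pos_iff.mp ((norm_pos_iff.mpr hk).trans_le (hmax k))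
  refine ⟨i, fun n => ?_⟩
  have hpow : (A ^ n) *ᵥ x = μ ^ n • x := by
    rw [← toLin'_apply, toLin'_pow, hx.pow_apply]
  rw [← norm_pow]
  exact norm_le_row_sum_of_mulVec_eq_smul hpow hi hmax

end RowSum

theorem exists_div_card_le_of_le_sum {ι K : Type*} [Fintype ι] [Nonempty ι] [Field K]
    [LinearOrder K] [IsStrictOrderedRing K] {f : ι → K} {c : K} (hc : c ≤ ∑ j, f j) :
    ∃ j, c / Fintype.card ι ≤ f j := by
  have havg : ∑ _j : ι, c / Fintype.card ι ≤ ∑ j, f j := by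
    rwa [Finset.sum_const, Finset.card_univ, nsmul_eq_mul,
      mul_div_cancel₀ _ (Nat.cast_ne_zero.mpr Fintype.card_ne_zero)]
  obtain ⟨j, -, hj⟩ := Finset.exists_le_of_sum_le Finset.univ_nonempty havg
  exact ⟨j, hj⟩

theorem matrix_power_entry_lower_bound_general {ι R : Type*} [Fintype ι] [DecidableEq ι]
    [NormedCommRing R] [NormOneClass R] [NormMulClass R] {A : Matrix ι ι R} {μ : R}
    (hμ : Module.End.HasEigenvalue (toLin' A) μ) :
    ∃ i, ∀ n : ℕ, ∃ j, ‖μ‖ ^ n / Fintype.card ι ≤ ‖(A ^ n) i j‖ := by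
  obtain ⟨i, hi⟩ := exists_forall_norm_pow_le_row_sum hμ
  have : Nonempty ι := ⟨i⟩
  exact ⟨i, fun n => exists_div_card_le_of_le_sum (hi n)⟩

theorem matrix_power_entry_lower_bound (M : Matrix (Fin 3) (Fin 3) ℝ)
    (hM : ∀ i j, 0 ≤ M i j) (lam : ℝ) (hlam : 0 < lam)
    (heig : ∃ x : Fin 3 → ℝ, x ≠ 0 ∧ M.mulVec x = lam • x) :
    ∀ n : ℕ, ∃ i j : Fin 3, lam ^ n / 3 ≤ (M ^ n) i j := by
  obtain ⟨x, hx0, hx⟩ := heig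
  obtain ⟨i, hi⟩ := matrix_power_entry_lower_bound_general <|
    Module.End.hasEigenvalue_of_hasEigenvector ⟨Module.End.mem_eigenspace_iff.mpr hx, hx0⟩
  exact fun n => ⟨i, by
    simpa [abs_of_pos hlam, abs_of_nonneg (pow_apply_nonneg hM n i _)] using hi n⟩
end
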